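/- Let L be a nilpotent symplectic alternating algebra of dimension 2n ≥ 2 over a field 𝔽. Then there exists an ascending chain of isotropic ideals {0} = I₀ < I₁ < ⋯ < I_{n−1} < I_n with dim I_r = r for r = 0, …, n. Furthermore, if 2n ≥ 6, then I_{n−1}^⊥ is abelian, the chain {0} < I₂ < I₃ < ⋯ < I_{n−1} < I_{n−1}^⊥ < I_{n−2}^⊥ < ⋯ < I₂^⊥ < L is central (each term is an ideal and the product of each term with L lies in the preceding term), and consequently L is nilpotent of class at most 2n − 3. -/

import Mathlib

/-!
An isotropic ideal `I` of dimension `< n` is properly contained in the ideal `I^⊥`. If `L^k` is the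
last term of the lower central series with `I^⊥ ∩ L^k ⊄ I`, then every `x ∈ (I^⊥ ∩ L^k) ∖ I`
satisfies `x·L ⊆ I`, so `I + 𝔽x` is an isotropic ideal one dimension larger, mapped into `I` by
multiplication with `L`. Iterating gives `I_{r+1}·L ⊆ I_r` for all `r < n`.

Everything else comes from the invariance of `(u·v, w)` under cyclic permutations, which yields
`U·V ⊆ W^⊥ ↔ V·W ⊆ U^⊥`.

* `I_{r+1}·L ⊆ I_r` dualizes to `I_r^⊥·L ⊆ I_{r+1}^⊥`.
* For `y ∈ I₂` the alternating form `(y·u, v)` has rank at most one because `y·L ⊆ I₁`. Alternating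
  forms have even rank, so it vanishes and `I₂` is central.
* Put `J = I_{n-1}^⊥`. Then `I_n = I_n^⊥` has codimension one in `J`, so `J·J = I_n·J`, which
  vanishes as `J·L ⊆ I_n^⊥`. Dually, `J·L ⊆ J^⊥ = I_{n-1}`.
-/

variable {𝔽 : Type*} [Field 𝔽] {L : Type*} [AddCommGroup L] [Module 𝔽 L]

structure SymplecticAlternatingAlgebra (𝔽 L : Type*) [Field 𝔽] [AddCommGroup L]
    [Module 𝔽 L] where
  form : L →ₗ[𝔽] L →ₗ[𝔽] 𝔽
  mul : L →ₗ[𝔽] L →ₗ[𝔽] L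
  form_alt : ∀ x, form x x = 0
  form_nondeg : ∀ x, (∀ y, form x y = 0) → x = 0
  mul_alt : ∀ x, mul x x = 0
  compat : ∀ u v w, form (mul u v) w = form (mul v w) u

namespace SymplecticAlternatingAlgebra

variable (S : SymplecticAlternatingAlgebra 𝔽 L)

/-- `U·V`, the span of all products `u·v`. -/
def prodSub (U V : Submodule 𝔽 L) : Submodule 𝔽 L := Submodule.map₂ S.mul U V

/-- An ideal: `I·L ⊆ I`. -/
def IsIdeal (I : Submodule 𝔽 L) : Prop := S.prodSub I ⊤ ≤ I

/-- Orthogonal complement with respect to the form. -/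
def perp (U : Submodule 𝔽 L) : Submodule 𝔽 L where
  carrier := {x | ∀ u ∈ U, S.form x u = 0}
  add_mem' := by
    intro a b ha hb u hu
    simp [map_add, ha u hu, hb u hu]
  zero_mem' := by
    intro u hu
    simp
  smul_mem' := by
    intro c a ha u hu
    simp [ha u hu]

/-- `lcs n = L^(n+1)`: the lower central series, `lcs 0 = L¹ = L`. -/
def lcs : ℕ → Submodule 𝔽 L
  | 0 => ⊤
  | n + 1 => S.prodSub (lcs n) ⊤

/-- `ucs n = Z_n(L)`: the upper central series. -/
def ucs : ℕ → Submodule 𝔽 L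
  | 0 => ⊥
  | n + 1 => ⨅ y : L, (ucs n).comap (S.mul.flip y)

/-- The center `Z(L)`. -/
def center : Submodule 𝔽 L := ⨅ y : L, LinearMap.ker (S.mul.flip y)

/-- Nilpotency: some term of the lower central series vanishes. -/
def IsNilpotent : Prop := ∃ n, S.lcs n = ⊥

/-- `s` generates `L` as an algebra: the smallest subspace containing `s`
and closed under the multiplication is `L` itself. -/
def Generates (s : Set L) : Prop :=
  ∀ M : Submodule 𝔽 L, s ⊆ (M : Set L) → S.prodSub M M ≤ M → M = ⊤

end SymplecticAlternatingAlgebra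

open SymplecticAlternatingAlgebra Module

lemma exists_sup_span_singleton_eq_of_covBy {R M : Type*} [Semiring R] [AddCommMonoid M]
    [Module R M] {A B : Submodule R M} (h : A ⋖ B) :
    ∃ x ∉ A, A ⊔ R ∙ x = B := by
  obtain ⟨x, hxB, hxA⟩ := SetLike.exists_of_lt h.lt
  have hle : A ⊔ R ∙ x ≤ B := sup_le h.le (by simpa using hxB)
  exact ⟨x, hxA, hle.eq_of_not_lt (h.2 (by simpa using hxA))⟩

section AlternatingMaps

variable {R M N : Type*} [CommRing R] [AddCommMonoid M] [Module R M] [AddCommGroup N]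
  [Module R N]

lemma map₂_self_eq_of_covBy {f : M →ₗ[R] M →ₗ[R] N} (hf : f.IsAlt) {A B : Submodule R M}
    (h : A ⋖ B) : Submodule.map₂ f B B = Submodule.map₂ f A B := by
  refine le_antisymm ?_ (Submodule.map₂_le_map₂_left h.le)
  obtain ⟨x, -, rfl⟩ := exists_sup_span_singleton_eq_of_covBy h
  have hA : A ≤ (Submodule.map₂ f A (A ⊔ R ∙ x)).comap (f x) := fun a ha => by
    rw [Submodule.mem_comap, ← hf.neg]
    exact neg_mem (Submodule.apply_mem_map₂ f ha
      (Submodule.mem_sup_right (Submodule.mem_span_singleton_self x)))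
  rw [Submodule.map₂_sup_left, Submodule.map₂_span_singleton_eq_map]
  exact sup_le le_rfl (Submodule.map_le_iff_le_comap.2 (sup_le hA (by simp [hf x])))

lemma eq_zero_of_isAlt_of_forall_mem_span_singleton [IsDomain R] [Module.IsTorsionFree R N]
    {B : M →ₗ[R] M →ₗ[R] N} (hB : B.IsAlt) {g : M →ₗ[R] N} (hg : ∀ u, B u ∈ R ∙ g) :
    B = 0 := by
  choose c hc using fun u => Submodule.mem_span_singleton.1 (hg u)
  by_contra hB0
  obtain ⟨w, hw⟩ : ∃ w, g w ≠ 0 := by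
    by_contra! hg0
    exact hB0 (LinearMap.ext₂ fun u v => by simp [← hc, hg0])
  have apply_eq_zero (u : M) (hu : B u w = 0) : B u = 0 := by
    rw [← hc u, LinearMap.smul_apply] at hu
    rw [← hc u, (smul_eq_zero.1 hu).resolve_right hw, zero_smul]
  have hBw : B w = 0 := apply_eq_zero w (hB w)
  exact hB0 (LinearMap.ext fun u => apply_eq_zero u (hB.eq_iff.1 (by simp [hBw])))

end AlternatingMaps

lemma finrank_eq_add_one_of_covBy [FiniteDimensional 𝔽 L] {A B : Submodule 𝔽 L} (h : A ⋖ B) :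
    finrank 𝔽 B = finrank 𝔽 A + 1 := by
  obtain ⟨x, hx, rfl⟩ := exists_sup_span_singleton_eq_of_covBy h
  exact Submodule.finrank_sup_span_singleton hx

namespace SymplecticAlternatingAlgebra

variable {S : SymplecticAlternatingAlgebra 𝔽 L} {I J U V W : Submodule 𝔽 L}

lemma form_isAlt : S.form.IsAlt := S.form_alt

lemma mul_isAlt : S.mul.IsAlt := S.mul_alt

lemma form_nondegenerate : S.form.Nondegenerate :=
  form_isAlt.isRefl.nondegenerate_iff_separatingLeft.2 S.form_nondeg

lemma form_comp_mul_isAlt (y : L) : (S.form ∘ₗ S.mul y).IsAlt := fun u => by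
  rw [LinearMap.comp_apply, S.compat, S.mul_alt, map_zero, LinearMap.zero_apply]

lemma mem_perp {x : L} : x ∈ S.perp U ↔ ∀ u ∈ U, S.form x u = 0 := Iff.rfl

lemma perp_eq_orthogonal : S.perp U = LinearMap.BilinForm.orthogonal S.form U :=
  Submodule.ext fun _ => forall₂_congr fun _ _ => form_isAlt.eq_iff

lemma le_perp_iff : U ≤ S.perp V ↔ Submodule.map₂ S.form U V = ⊥ := by
  rw [← le_bot_iff, Submodule.map₂_le]
  rfl

lemma perp_bot : S.perp ⊥ = ⊤ := by
  rw [← top_le_iff, le_perp_iff, Submodule.map₂_bot_right]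

lemma perp_top : S.perp ⊤ = ⊥ :=
  (Submodule.eq_bot_iff _).2 fun x hx => S.form_nondeg x fun y => hx y trivial

lemma perp_anti : Antitone S.perp := fun _ _ h _ hx u hu => hx u (h hu)

lemma le_perp_perp : U ≤ S.perp (S.perp U) := fun _ hx _ hy => form_isAlt.eq_iff.1 (hy _ hx)

section FiniteDimensional

variable [FiniteDimensional 𝔽 L]

lemma finrank_perp : finrank 𝔽 (S.perp U) = finrank 𝔽 L - finrank 𝔽 U := by
  rw [perp_eq_orthogonal, LinearMap.BilinForm.finrank_orthogonal form_nondegenerate]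

lemma perp_perp : S.perp (S.perp U) = U := by
  rw [perp_eq_orthogonal, perp_eq_orthogonal]
  exact LinearMap.BilinForm.orthogonal_orthogonal form_nondegenerate S.form_isAlt.isRefl U

lemma perp_le_perp : S.perp U ≤ S.perp V ↔ V ≤ U :=
  ⟨fun h => by simpa only [perp_perp] using S.perp_anti h, fun h => perp_anti h⟩

/-- The orthogonal complement as an anti-automorphism of the lattice of subspaces. -/
def perpOrderIso (S : SymplecticAlternatingAlgebra 𝔽 L) :
    Submodule 𝔽 L ≃o (Submodule 𝔽 L)ᵒᵈ where
  toFun U := OrderDual.toDual (S.perp U)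
  invFun U := S.perp (OrderDual.ofDual U)
  left_inv _ := perp_perp
  right_inv _ := perp_perp
  map_rel_iff' := perp_le_perp

lemma perp_covBy_perp (h : U ⋖ V) : S.perp V ⋖ S.perp U :=
  ((apply_covBy_apply_iff S.perpOrderIso).2 h).ofDual

lemma lt_perp_of_two_mul_finrank_lt (hU : U ≤ S.perp U)
    (hdim : 2 * finrank 𝔽 U < finrank 𝔽 L) : U < S.perp U := by
  refine hU.lt_of_ne fun h => ?_
  have hfinrank : finrank 𝔽 (S.perp U) = finrank 𝔽 L - finrank 𝔽 U := finrank_perp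
  rw [← h] at hfinrank
  omega

lemma perp_eq_self_of_finrank_eq (hU : U ≤ S.perp U) (hdim : finrank 𝔽 L = 2 * finrank 𝔽 U) :
    S.perp U = U :=
  (Submodule.eq_of_le_of_finrank_eq hU (by rw [finrank_perp]; omega)).symm

end FiniteDimensional

lemma prodSub_le : S.prodSub U V ≤ W ↔ ∀ u ∈ U, ∀ v ∈ V, S.mul u v ∈ W :=
  Submodule.map₂_le

lemma prodSub_mono_left (h : U ≤ V) : S.prodSub U W ≤ S.prodSub V W :=
  Submodule.map₂_le_map₂_left h

lemma prodSub_comm : S.prodSub U V = S.prodSub V U := by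
  refine le_antisymm ?_ ?_ <;>
  · rw [prodSub_le]
    intro u hu v hv
    rw [← mul_isAlt.neg]
    exact neg_mem (Submodule.apply_mem_map₂ _ hv hu)

lemma prodSub_le_perp_rotate : S.prodSub U V ≤ S.perp W ↔ S.prodSub V W ≤ S.perp U := by
  simp only [prodSub_le, mem_perp]
  exact ⟨fun h v hv w hw u hu => (S.compat u v w).symm.trans (h u hu v hv w hw),
    fun h u hu v hv w hw => (S.compat u v w).trans (h v hv w hw u hu)⟩

lemma prodSub_eq_bot_iff : S.prodSub U V = ⊥ ↔ S.prodSub V ⊤ ≤ S.perp U := by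
  rw [← le_bot_iff, ← S.perp_top, prodSub_le_perp_rotate]

lemma prodSub_perp_le_perp (h : S.prodSub V ⊤ ≤ U) : S.prodSub (S.perp U) ⊤ ≤ S.perp V := by
  rw [prodSub_comm, ← prodSub_le_perp_rotate]
  exact h.trans le_perp_perp

lemma isIdeal_bot : S.IsIdeal ⊥ := (Submodule.map₂_bot_left _ _).le

lemma IsIdeal.perp (hI : S.IsIdeal I) : S.IsIdeal (S.perp I) := prodSub_perp_le_perp hI

lemma lcs_add_le {c : ℕ → Submodule 𝔽 L} {k m : ℕ} (hk : S.lcs k ≤ c 0)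
    (hc : ∀ i < m, S.prodSub (c i) ⊤ ≤ c (i + 1)) : S.lcs (k + m) ≤ c m := by
  induction m with
  | zero => exact hk
  | succ m ih =>
    exact (prodSub_mono_left (ih fun i hi => hc i (by omega))).trans (hc m m.lt_succ_self)

lemma IsNilpotent.exists_mem_notMem_mul_mem (hnil : S.IsNilpotent) (hU : S.IsIdeal U)
    (hUI : ¬U ≤ I) : ∃ x ∈ U, x ∉ I ∧ ∀ y, S.mul x y ∈ I := by
  have hbase : ¬U ⊓ S.lcs 0 ≤ I := by simpa [lcs] using hUI
  have hex : ∃ k, U ⊓ S.lcs k ≤ I := hnil.imp fun k hk => by simp [hk]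
  obtain ⟨k, hk, hk'⟩ := Nat.exists_not_and_succ_of_not_zero_of_exists hbase hex
  obtain ⟨x, ⟨hxU, hxk⟩, hxI⟩ := SetLike.not_le_iff_exists.1 hk
  exact ⟨x, hxU, hxI, fun y => hk'
    ⟨prodSub_le.1 hU x hxU y trivial, Submodule.apply_mem_map₂ _ hxk trivial⟩⟩

lemma prodSub_top_eq_bot_of_le_isPrincipal [hI : I.IsPrincipal] (hJ : S.prodSub J ⊤ ≤ I) :
    S.prodSub J ⊤ = ⊥ := by
  obtain ⟨x, rfl⟩ := hI
  rw [← le_bot_iff, prodSub_le]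
  intro y hy u _
  have hmem (v : L) : (S.form ∘ₗ S.mul y) v ∈ 𝔽 ∙ S.form x := by
    obtain ⟨c, hc⟩ := Submodule.mem_span_singleton.1 (prodSub_le.1 hJ y hy v trivial)
    exact Submodule.mem_span_singleton.2 ⟨c, by simp [← hc]⟩
  have hzero := eq_zero_of_isAlt_of_forall_mem_span_singleton (form_comp_mul_isAlt y) hmem
  exact S.form_nondeg _ fun w => LinearMap.congr_fun₂ hzero u w

lemma IsNilpotent.exists_covBy_isotropic (hnil : S.IsNilpotent) (hI : S.IsIdeal I)
    (hlt : I < S.perp I) : ∃ J, I ⋖ J ∧ J ≤ S.perp J ∧ S.prodSub J ⊤ ≤ I := by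
  obtain ⟨x, hx, hxI, hxL⟩ := hnil.exists_mem_notMem_mul_mem hI.perp hlt.not_ge
  have hcov : I ⋖ 𝔽 ∙ x ⊔ I := Submodule.covBy_span_singleton_sup hxI
  have hperp : 𝔽 ∙ x ⊔ I ≤ S.perp I := sup_le (by simpa using hx) hlt.le
  refine ⟨_, hcov, ?_, ?_⟩
  · rw [le_perp_iff, map₂_self_eq_of_covBy form_isAlt hcov, ← le_perp_iff]
    exact le_perp_perp.trans (perp_anti hperp)
  · rw [prodSub, Submodule.map₂_sup_left, Submodule.map₂_span_singleton_eq_map]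
    exact sup_le (Submodule.map_le_iff_le_comap.2 fun y _ => hxL y) hI

/-- A flag `0 = I 0 < I 1 < ⋯ < I n` of isotropic ideals with `dim (I r) = r` which is central,
that is, `(I (r + 1))·L ⊆ I r`. The dimensions are encoded by covering relations, the ideal property
by centrality, and the values `I r` with `r > n` are irrelevant. -/
structure IsCentralIsotropicFlag (S : SymplecticAlternatingAlgebra 𝔽 L) (I : ℕ → Submodule 𝔽 L)
    (n : ℕ) : Prop where
  zero : I 0 = ⊥
  covBy_succ : ∀ r < n, I r ⋖ I (r + 1)
  isotropic : ∀ r ≤ n, I r ≤ S.perp (I r)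
  prodSub_succ_le : ∀ r < n, S.prodSub (I (r + 1)) ⊤ ≤ I r

namespace IsCentralIsotropicFlag

variable {I : ℕ → Submodule 𝔽 L} {n r : ℕ}

lemma isIdeal (h : S.IsCentralIsotropicFlag I n) (hr : r ≤ n) : S.IsIdeal (I r) := by
  cases r with
  | zero => exact h.zero ▸ isIdeal_bot
  | succ r => exact (h.prodSub_succ_le r hr).trans (h.covBy_succ r hr).le

lemma prodSub_perp_le (h : S.IsCentralIsotropicFlag I n) (hr : r < n) :
    S.prodSub (S.perp (I r)) ⊤ ≤ S.perp (I (r + 1)) :=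
  prodSub_perp_le_perp (h.prodSub_succ_le r hr)

lemma prodSub_two_top (h : S.IsCentralIsotropicFlag I n) (hn : 2 ≤ n) :
    S.prodSub (I 2) ⊤ = ⊥ := by
  obtain ⟨x, -, hx⟩ := exists_sup_span_singleton_eq_of_covBy (h.covBy_succ 0 (by omega))
  have : (I 1).IsPrincipal := ⟨x, by rw [← hx, h.zero, bot_sup_eq]⟩
  exact prodSub_top_eq_bot_of_le_isPrincipal (h.prodSub_succ_le 1 hn)

lemma lcs_one_le (h : S.IsCentralIsotropicFlag I n) (hn : 2 ≤ n) : S.lcs 1 ≤ S.perp (I 2) := by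
  simpa only [lcs, perp_bot] using prodSub_perp_le_perp (h.prodSub_two_top hn).le

variable [FiniteDimensional 𝔽 L]

lemma finrank_eq (h : S.IsCentralIsotropicFlag I n) (hr : r ≤ n) : finrank 𝔽 (I r) = r := by
  induction r with
  | zero => rw [h.zero, finrank_bot]
  | succ r ih => rw [finrank_eq_add_one_of_covBy (h.covBy_succ r hr), ih (by omega)]

lemma prodSub_perp_self (h : S.IsCentralIsotropicFlag I (n + 1))
    (hdim : finrank 𝔽 L = 2 * (n + 1)) : S.prodSub (S.perp (I n)) (S.perp (I n)) = ⊥ := by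
  have hlag : S.perp (I (n + 1)) = I (n + 1) :=
    perp_eq_self_of_finrank_eq (h.isotropic _ le_rfl) (by rw [hdim, h.finrank_eq le_rfl])
  have hcov : I (n + 1) ⋖ S.perp (I n) := hlag ▸ perp_covBy_perp (h.covBy_succ n n.lt_succ_self)
  rw [prodSub, map₂_self_eq_of_covBy mul_isAlt hcov]
  exact prodSub_eq_bot_iff.2 (h.prodSub_perp_le n.lt_succ_self)

lemma prodSub_perp_top_le (h : S.IsCentralIsotropicFlag I (n + 1))
    (hdim : finrank 𝔽 L = 2 * (n + 1)) : S.prodSub (S.perp (I n)) ⊤ ≤ I n := by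
  simpa only [perp_perp] using prodSub_eq_bot_iff.1 (h.prodSub_perp_self hdim)

lemma lcs_eq_bot (h : S.IsCentralIsotropicFlag I (n + 3)) (hdim : finrank 𝔽 L = 2 * (n + 3)) :
    S.lcs (2 * n + 3) = ⊥ := by
  have hdesc : S.lcs (1 + n) ≤ S.perp (I (n + 2)) :=
    lcs_add_le (c := fun i => S.perp (I (i + 2))) (h.lcs_one_le (by omega))
      fun i hi => h.prodSub_perp_le (by omega)
  have hmid : S.lcs (1 + n + 1) ≤ I (n + 2) :=
    (prodSub_mono_left hdesc).trans (h.prodSub_perp_top_le hdim)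
  have hasc : S.lcs (1 + n + 1 + n) ≤ I (n + 2 - n) :=
    lcs_add_le (c := fun i => I (n + 2 - i)) hmid fun i hi => by
      have hcentral := h.prodSub_succ_le (n + 2 - (i + 1)) (by omega)
      rwa [show n + 2 - (i + 1) + 1 = n + 2 - i by omega] at hcentral
  rw [Nat.add_sub_cancel_left] at hasc
  rw [show 2 * n + 3 = 1 + n + 1 + n + 1 by omega, ← le_bot_iff]
  exact (prodSub_mono_left hasc).trans (h.prodSub_two_top (by omega)).le

end IsCentralIsotropicFlag

lemma IsNilpotent.exists_isCentralIsotropicFlag [FiniteDimensional 𝔽 L] (hnil : S.IsNilpotent)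
    {n : ℕ} (hn : 2 * n ≤ finrank 𝔽 L) : ∃ I, S.IsCentralIsotropicFlag I n := by
  choose! f hcov hiso hmul using
    fun I (hI : S.IsIdeal I) (hlt : I < S.perp I) => hnil.exists_covBy_isotropic hI hlt
  let I (r : ℕ) : Submodule 𝔽 L := f^[r] ⊥
  have hsucc (r : ℕ) : I (r + 1) = f (I r) := Function.iterate_succ_apply' f r ⊥
  suffices h : ∀ m ≤ n, S.IsCentralIsotropicFlag I m from ⟨I, h n le_rfl⟩
  intro m hm
  induction m with
  | zero => exact ⟨rfl, by simp, by simp [I], by simp⟩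
  | succ m ih =>
    have h := ih (by omega)
    have hideal := h.isIdeal le_rfl
    have hlt : I m < S.perp (I m) :=
      lt_perp_of_two_mul_finrank_lt (h.isotropic m le_rfl) (by rw [h.finrank_eq le_rfl]; omega)
    refine ⟨rfl, Nat.forall_lt_succ_right.2 ⟨h.covBy_succ, ?_⟩, fun r hr => ?_,
      Nat.forall_lt_succ_right.2 ⟨h.prodSub_succ_le, ?_⟩⟩
    · exact hsucc m ▸ hcov _ hideal hlt
    · obtain hr | rfl := Nat.le_succ_iff.1 hr
      · exact h.isotropic r hr
      · exact hsucc m ▸ hiso _ hideal hlt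
    · exact hsucc m ▸ hmul _ hideal hlt

end SymplecticAlternatingAlgebra

theorem isotropic_ideal_chain [FiniteDimensional 𝔽 L]
    (S : SymplecticAlternatingAlgebra 𝔽 L) (hnil : S.IsNilpotent)
    (n : ℕ) (hn : 1 ≤ n) (hdim : Module.finrank 𝔽 L = 2 * n) :
    ∃ I : ℕ → Submodule 𝔽 L,
      I 0 = ⊥ ∧
      (∀ r, r ≤ n → S.IsIdeal (I r)) ∧
      (∀ r, r ≤ n → I r ≤ S.perp (I r)) ∧
      (∀ r, r ≤ n → Module.finrank 𝔽 (I r) = r) ∧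
      (∀ r, r < n → I r < I (r + 1)) ∧
      (3 ≤ n →
        S.prodSub (S.perp (I (n - 1))) (S.perp (I (n - 1))) = ⊥ ∧
        S.prodSub (I 2) ⊤ = ⊥ ∧
        (∀ k, 2 ≤ k → k + 1 ≤ n - 1 → S.prodSub (I (k + 1)) ⊤ ≤ I k) ∧
        S.prodSub (S.perp (I (n - 1))) ⊤ ≤ I (n - 1) ∧
        (∀ k, 2 ≤ k → k + 1 ≤ n - 1 →
          S.prodSub (S.perp (I k)) ⊤ ≤ S.perp (I (k + 1))) ∧
        S.lcs 1 ≤ S.perp (I 2) ∧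
        S.lcs (2 * n - 3) = ⊥) := by
  obtain ⟨I, h⟩ := hnil.exists_isCentralIsotropicFlag hdim.ge
  refine ⟨I, h.zero, fun r hr => h.isIdeal hr, h.isotropic, fun r hr => h.finrank_eq hr,
    fun r hr => (h.covBy_succ r hr).lt, fun h3 => ?_⟩
  obtain ⟨m, rfl⟩ : ∃ m, n = m + 3 := ⟨n - 3, by omega⟩
  exact ⟨h.prodSub_perp_self hdim, h.prodSub_two_top (by omega),
    fun k _ hk => h.prodSub_succ_le k (by omega), h.prodSub_perp_top_le hdim,
    fun k _ hk => h.prodSub_perp_le (by omega), h.lcs_one_le (by omega), h.lcs_eq_bot hdim⟩
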